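/- arXiv:1611.07858 — 9 statements merged into one kernel-verified Lean document; each statement's English description precedes it below -/
import Mathlib

section
/- Let R be a (possibly non-unital) ring with index of nilpotence at most n (where n ≥ 1), i.e., x^n = 0 for every nilpotent element x of R. If e₁, e₂, …, e_{n+1} are pairwise orthogonal idempotents in R, then for all elements a₁, …, aₙ ∈ R one has e₁·a₁·e₂·a₂·⋯·eₙ·aₙ·e_{n+1} = 0 (that is, e₁Re₂R⋯eₙRe_{n+1} = 0). -/
/-!
Put `x = ∑ i, e i * a i * e (i+1)`, the sum over `0 ≤ i < n`: a strictly upper triangular matrix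
for the Peirce decomposition of the `e i`. Orthogonality gives `e i * x = e i * a i * e (i+1)` for
`i < n`, and `e n * x = 0`. Multiplying `e i` repeatedly by `x` thus pushes it along the chain
until it dies, so `x` is nilpotent (`mul_nupow_eq_zero`), and hence `x ^ n = 0` by hypothesis.
On the other hand `e 0 * x ^ n` is the alternating product (`mul_nupow_eq_altProd`).
-/

/-- `nupow x k` is the `(k+1)`-st power `x^(k+1)` of `x`, which makes sense in a
non-unital ring. -/
def nupow {R : Type*} [NonUnitalRing R] (x : R) : ℕ → R
  | 0 => x
  | k + 1 => x * nupow x k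

/-- The alternating product `e 0 * a 0 * e 1 * a 1 * ⋯ * e (n-1) * a (n-1) * e n`. -/
def altProd {R : Type*} [NonUnitalRing R] :
    (n : ℕ) → (Fin (n + 1) → R) → (Fin n → R) → R
  | 0, e, _ => e 0
  | n + 1, e, a => e 0 * a 0 * altProd n (fun i => e i.succ) (fun i => a i.succ)

/-- If right multiplication by `x` moves each `e i` one step along the chain, then `e 0` times
the `(n+1)`-st power of `x` is the alternating product of length `n + 1`. -/
lemma mul_nupow_eq_altProd {R : Type*} [NonUnitalRing R] (x : R) (n : ℕ)
    (e : Fin (n + 2) → R) (a : Fin (n + 1) → R)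
    (hx : ∀ i : Fin (n + 1), e i.castSucc * x = e i.castSucc * a i * e i.succ) :
    e 0 * nupow x n = altProd (n + 1) e a := by
  induction n with
  | zero => exact hx 0
  | succ n ih =>
    have h := ih (fun i => e i.succ) (fun i => a i.succ) (fun i => hx i.succ)
    have h0 : e 0 * x = e 0 * a 0 * e 1 := hx 0
    change e 0 * (x * nupow x n) =
      e 0 * a 0 * altProd (n + 1) (fun i => e i.succ) (fun i => a i.succ)
    rw [← h, ← mul_assoc, h0, mul_assoc]
    rfl

/-- If moreover `x` kills the last idempotent, every `e i` dies after `n + 1` steps. -/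
lemma mul_nupow_eq_zero {R : Type*} [NonUnitalRing R] (x : R) (n : ℕ)
    (e : Fin (n + 1) → R) (a : Fin n → R)
    (hx : ∀ i : Fin n, e i.castSucc * x = e i.castSucc * a i * e i.succ)
    (hlast : e (Fin.last n) * x = 0) (i : Fin (n + 1)) :
    e i * nupow x n = 0 := by
  induction n with
  | zero =>
    obtain rfl : i = Fin.last 0 := Fin.ext (by simp)
    exact hlast
  | succ n ih =>
    change e i * (x * nupow x n) = 0
    rw [← mul_assoc]
    induction i using Fin.lastCases with
    | last => rw [hlast, zero_mul]
    | cast j =>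
      have h := ih (fun i => e i.succ) (fun i => a i.succ) (fun i => hx i.succ) hlast j
      rw [hx, mul_assoc, h, mul_zero]

/-- If a (possibly non-unital) ring `R` has index of nilpotence at most `n` (with `n ≥ 1`),
i.e. `x^n = 0` for every nilpotent `x`, and `e 0, …, e n` are `n+1` pairwise orthogonal
idempotents, then `e 0 * a 0 * e 1 * a 1 * ⋯ * e (n-1) * a (n-1) * e n = 0` for all
`a 0, …, a (n-1) ∈ R`; that is, `e₁Re₂R⋯eₙRe_{n+1} = 0`. -/
theorem stmt0 {R : Type*} [NonUnitalRing R] (n : ℕ) (hn : 1 ≤ n)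
    (hidx : ∀ x : R, (∃ k : ℕ, nupow x k = 0) → nupow x (n - 1) = 0)
    (e : Fin (n + 1) → R)
    (hidem : ∀ i, e i * e i = e i)
    (horth : ∀ i j, i ≠ j → e i * e j = 0)
    (a : Fin n → R) :
    altProd n e a = 0 := by
  obtain ⟨m, rfl⟩ : ∃ m, n = m + 1 := ⟨n - 1, by omega⟩
  let x : R := ∑ i : Fin (m + 1), e i.castSucc * a i * e i.succ
  have hx : ∀ i : Fin (m + 1), e i.castSucc * x = e i.castSucc * a i * e i.succ := by
    intro i
    simp only [x, Finset.mul_sum]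
    rw [Finset.sum_eq_single i]
    · rw [← mul_assoc, ← mul_assoc, hidem]
    · intro j _ hj
      rw [← mul_assoc, ← mul_assoc, horth _ _ (fun h => hj (Fin.castSucc_injective _ h).symm),
        zero_mul, zero_mul]
    · simp
  have hlast : e (Fin.last (m + 1)) * x = 0 := by
    simp only [x, Finset.mul_sum]
    refine Finset.sum_eq_zero fun j _ => ?_
    rw [← mul_assoc, ← mul_assoc, horth _ _ (Fin.castSucc_ne_last j).symm, zero_mul, zero_mul]
  have hnil : nupow x (m + 2) = 0 := by
    change (∑ i : Fin (m + 1), e i.castSucc * a i * e i.succ) * nupow x (m + 1) = 0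
    rw [Finset.sum_mul]
    refine Finset.sum_eq_zero fun j _ => ?_
    rw [mul_assoc, mul_nupow_eq_zero x (m + 1) e a hx hlast, mul_zero]
  have hpow : nupow x m = 0 := hidx x ⟨_, hnil⟩
  rw [← mul_nupow_eq_altProd x m e a hx, hpow, mul_zero]
end

section
/- Let R be a ring with identity with index of nilpotence at most n (where n ≥ 1), i.e., x^n = 0 for every nilpotent element x of R. Then there do not exist pairwise orthogonal idempotents ε₁, …, ε_{n+1} in R such that the right ideals Aᵢ = εᵢR are all nonzero, pairwise isomorphic as right R-modules, and independent (meaning: whenever x₁ + x₂ + ⋯ + x_{n+1} = 0 with xᵢ ∈ Aᵢ for each i, then every xᵢ = 0). -/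
/-!
An isomorphism `εᵢR ≃ εⱼR` is left multiplication by some `a = εⱼ a εᵢ` that is injective
on `εᵢR`. Picking such an `aₖ` for each consecutive pair `(εₖ, εₖ₊₁)`, `k < n`, the sum
`x = ∑ aₖ` acts as a shift `ε₀R → ε₁R → ⋯ → εₙR → 0`, an `(n+1) × (n+1)` Jordan block. Hence
`x ^ (n + 1) = 0`, whereas `x ^ n * ε₀ = aₙ₋₁ ⋯ a₀ ≠ 0` because every step is injective; this
contradicts the bound `n` on the index of nilpotence.
-/

/-- A chain of `n + 1` orthogonal idempotents joined by `n` injective shifts gives a nilpotent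
element whose `n`-th power is nonzero. The sequences are indexed by `ℕ`, but only the values
`e k` for `k ≤ n` and `a k` for `k < n` are constrained. -/
lemma exists_isNilpotent_pow_ne_zero {R : Type*} [Ring R] (n : ℕ) (e a : ℕ → R)
    (hid : ∀ k ≤ n, e k * e k = e k)
    (horth : ∀ i ≤ n, ∀ j ≤ n, i ≠ j → e i * e j = 0)
    (h0 : e 0 ≠ 0)
    (hl : ∀ k < n, e (k + 1) * a k = a k)
    (hr : ∀ k < n, a k * e k = a k)
    (hinj : ∀ k < n, ∀ z, e k * z = z → a k * z = 0 → z = 0) :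
    ∃ x : R, IsNilpotent x ∧ x ^ n ≠ 0 := by
  set x : R := ∑ k ∈ Finset.range n, a k with hx
  have hzero : ∀ i < n, ∀ j ≤ n, i ≠ j → a i * e j = 0 := fun i hi j hj hij => by
    rw [← hr i hi, mul_assoc, horth i hi.le j hj hij, mul_zero]
  have hxe : ∀ j < n, x * e j = a j := fun j hj => by
    rw [hx, Finset.sum_mul, Finset.sum_eq_single j, hr j hj]
    · exact fun i hi hij => hzero i (Finset.mem_range.1 hi) j hj.le hij
    · exact fun h => absurd (Finset.mem_range.2 hj) h
  have hxn : x * e n = 0 := by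
    rw [hx, Finset.sum_mul]
    exact Finset.sum_eq_zero fun i hi =>
      hzero i (Finset.mem_range.1 hi) n le_rfl (Finset.mem_range.1 hi).ne
  have hpow : ∀ k j, j ≤ n → n < j + k → x ^ k * e j = 0 := by
    intro k
    induction k with
    | zero => intro j hj h; omega
    | succ k ih =>
      intro j hj h
      rw [pow_succ, mul_assoc]
      rcases hj.eq_or_lt with rfl | hj
      · rw [hxn, mul_zero]
      · rw [hxe j hj, ← hl j hj, ← mul_assoc, ih (j + 1) hj (by omega), zero_mul]
  have hmain : ∀ k ≤ n, e k * (x ^ k * e 0) = x ^ k * e 0 ∧ x ^ k * e 0 ≠ 0 := by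
    intro k
    induction k with
    | zero => intro _; simpa using ⟨hid 0 (Nat.zero_le n), h0⟩
    | succ k ih =>
      intro hk
      obtain ⟨h1, h2⟩ := ih (by omega)
      have hstep : x ^ (k + 1) * e 0 = a k * (x ^ k * e 0) := by
        rw [pow_succ', mul_assoc, ← hxe k hk, mul_assoc, h1]
      rw [hstep]
      exact ⟨by rw [← mul_assoc, hl k hk], fun h => h2 (hinj k hk _ h1 h)⟩
  refine ⟨x, ⟨n + 1, ?_⟩, fun h => (hmain n le_rfl).2 (by rw [h, zero_mul])⟩
  -- The rightmost factor `x` is a sum of terms in `e (k + 1) * R`, and `x ^ n` kills each of them.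
  rw [pow_succ]
  nth_rw 2 [hx]
  rw [Finset.mul_sum]
  refine Finset.sum_eq_zero fun k hk => ?_
  have hk := Finset.mem_range.1 hk
  rw [← hl k hk, ← mul_assoc, hpow n (k + 1) hk (by omega), zero_mul]

lemma mem_span_op_singleton_iff {R : Type*} [Ring R] {e : R} (he : IsIdempotentElem e) (z : R) :
    z ∈ Submodule.span Rᵐᵒᵖ {e} ↔ e * z = z := by
  rw [Submodule.mem_span_singleton]
  constructor
  · rintro ⟨r, rfl⟩
    rw [MulOpposite.smul_eq_mul_unop, ← mul_assoc, he.eq]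
  · exact fun h => ⟨MulOpposite.op z, by rw [MulOpposite.smul_eq_mul_unop, MulOpposite.unop_op, h]⟩

/-- An isomorphism `eR ≃ fR` is left multiplication by the image of `e`. -/
lemma exists_mul_of_linearEquiv {R : Type*} [Ring R] {e f : R} (he : IsIdempotentElem e)
    (hf : IsIdempotentElem f)
    (φ : (Submodule.span Rᵐᵒᵖ {e} : Submodule Rᵐᵒᵖ R) ≃ₗ[Rᵐᵒᵖ]
      (Submodule.span Rᵐᵒᵖ {f} : Submodule Rᵐᵒᵖ R)) :
    ∃ a : R, f * a = a ∧ a * e = a ∧ ∀ z, e * z = z → a * z = 0 → z = 0 := by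
  let e' : (Submodule.span Rᵐᵒᵖ {e} : Submodule Rᵐᵒᵖ R) :=
    ⟨e, Submodule.mem_span_singleton_self e⟩
  have key : ∀ (z : R) (hz : e * z = z),
      (φ e' : R) * z = φ ⟨z, (mem_span_op_singleton_iff he z).2 hz⟩ := by
    intro z hz
    have h : (⟨z, (mem_span_op_singleton_iff he z).2 hz⟩ :
        (Submodule.span Rᵐᵒᵖ {e} : Submodule Rᵐᵒᵖ R)) = MulOpposite.op z • e' :=
      Subtype.ext hz.symm
    rw [h, map_smul]
    rfl
  refine ⟨φ e', (mem_span_op_singleton_iff hf _).1 (φ e').2, key e he.eq, fun z hz h => ?_⟩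
  rw [key z hz] at h
  have h' := φ.map_eq_zero_iff.1 (Subtype.ext h)
  exact congrArg Subtype.val h'

/-- If a ring `R` with identity has index of nilpotence at most `n` (with `n ≥ 1`), then
there do not exist `n+1` pairwise orthogonal idempotents `ε 0, …, ε n` such that the right
ideals `A i = (ε i)R` are all nonzero, pairwise isomorphic as right `R`-modules, and
independent. Right ideals are submodules of `R` regarded as a module over `Rᵐᵒᵖ`, and
`(ε i)R` is the `Rᵐᵒᵖ`-span of `{ε i}`. -/
theorem stmt1 {R : Type*} [Ring R] (n : ℕ) (hn : 1 ≤ n)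
    (hidx : ∀ x : R, IsNilpotent x → x ^ n = 0) :
    ¬ ∃ ε : Fin (n + 1) → R,
        (∀ i, IsIdempotentElem (ε i)) ∧
        (∀ i j, i ≠ j → ε i * ε j = 0) ∧
        (∀ i, Submodule.span Rᵐᵒᵖ {ε i} ≠ ⊥) ∧
        (∀ i j, Nonempty
          ((Submodule.span Rᵐᵒᵖ {ε i} : Submodule Rᵐᵒᵖ R) ≃ₗ[Rᵐᵒᵖ]
            (Submodule.span Rᵐᵒᵖ {ε j} : Submodule Rᵐᵒᵖ R))) ∧
        (∀ x : Fin (n + 1) → R,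
          (∀ i, x i ∈ Submodule.span Rᵐᵒᵖ {ε i}) → (∑ i, x i) = 0 → ∀ i, x i = 0) := by
  rintro ⟨ε, hid, horth, hne, hiso, -⟩
  choose u hul hur huinj using fun i j =>
    exists_mul_of_linearEquiv (hid i) (hid j) (hiso i j).some
  obtain ⟨x, hx, hxn⟩ := exists_isNilpotent_pow_ne_zero n (fun k => ε (Fin.ofNat (n + 1) k))
    (fun k => u (Fin.ofNat (n + 1) k) (Fin.ofNat (n + 1) (k + 1)))
    (fun k _ => hid _)
    (fun i hi j hj hij => horth _ _ fun h => hij <| by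
      have h := congrArg Fin.val h
      simpa [Fin.ofNat, Nat.mod_eq_of_lt (Nat.lt_succ_of_le hi),
        Nat.mod_eq_of_lt (Nat.lt_succ_of_le hj)] using h)
    (fun h => hne _ (Submodule.span_singleton_eq_bot.2 h))
    (fun k _ => hul _ _) (fun k _ => hur _ _) (fun k _ => huinj _ _)
  exact hxn (hidx x hx)
end

section
/- Let R be a ring with identity such that every simple right R-module is Σ-injective, i.e., for every simple right R-module S and every index type ι, the direct sum S^{(ι)} = ⊕_{i∈ι} S is an injective right R-module. Then R is directly finite (Dedekind finite): for all a, b ∈ R, if ab = 1 then ba = 1. -/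
/-! Suppose `a * b = 1` and put `e = 1 - b * a`, so that `a * e = 0` and `e * b = 0`; assume
`e ≠ 0`. The elements `b ^ i * e * a ^ j` are matrix units, so the right ideals generated by
`b ^ j * e` form an infinite direct sum of copies of `e R` inside `R`. Let `S` be a simple quotient
of `e R`, realized as `R ⧸ M` for a maximal right ideal `M` containing `b * a = 1 - e`. The
coordinatewise projections give a map `x ↦ (e * a ^ i * x mod M)ᵢ` into `S^{(ℕ)}`, defined on the
right ideal `I` of those `x` for which almost all coordinates vanish, and `I` contains every
`b ^ j * e`. As `S^{(ℕ)}` is injective, this map extends to `R`, hence is `x ↦ s x` for a single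
finitely supported `s`. All its values are then supported in the support of `s`, whereas the value
at `b ^ j * e` is nonzero in coordinate `j` for every `j`. This is a contradiction. -/

/-- The row-times-column computation for the matrix units attached to `a * b = 1`. -/
lemma unit_row_mul_col {R : Type*} [Ring R] {a b : R} (hab : a * b = 1) (i j : ℕ) :
    (1 - b * a) * a ^ i * (b ^ j * (1 - b * a)) = if i = j then 1 - b * a else 0 := by
  have hea : a * (1 - b * a) = 0 := by
    rw [mul_sub, ← mul_assoc, hab]; simp
  have heb : (1 - b * a) * b = 0 := by
    rw [sub_mul, mul_assoc, hab]; simp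
  have key : ∀ i j : ℕ, a ^ (i + 1) * b ^ (j + 1) = a ^ i * b ^ j := by
    intro i j
    rw [pow_succ a, pow_succ' b, mul_assoc, ← mul_assoc a b, hab, one_mul]
  induction i generalizing j with
  | zero =>
    cases j with
    | zero =>
      rw [if_pos rfl, pow_zero, pow_zero, mul_one, one_mul, mul_sub, ← mul_assoc, heb]
      simp
    | succ j =>
      rw [if_neg (by lia), pow_zero, mul_one, pow_succ', ← mul_assoc, ← mul_assoc, heb]
      simp
  | succ i ih =>
    cases j with
    | zero =>
      rw [if_neg (by lia), pow_zero, one_mul, pow_succ, mul_assoc, mul_assoc, hea]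
      simp
    | succ j =>
      have h := ih j
      rw [mul_assoc, ← mul_assoc (a ^ i)] at h
      rw [mul_assoc, ← mul_assoc (a ^ (i + 1)), key, h]
      simp

/-- The right ideal of elements on which almost all of the maps `f i` vanish. -/
def finSuppSubmodule {A X S ι : Type*} [Ring A] [AddCommGroup X] [Module A X]
    [AddCommGroup S] [Module A S] (f : ι → X →ₗ[A] S) : Submodule A X where
  carrier := {x | (Function.support fun i => f i x).Finite}
  zero_mem' := by simp
  add_mem' {x y} hx hy := by
    refine (Set.Finite.union hx hy).subset fun i hi => ?_
    by_contra h
    simp_all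
  smul_mem' c x hx := by
    refine Set.Finite.subset hx fun i hi h => hi ?_
    exact (map_smul (f i) c x).trans ((congrArg (c • ·) h).trans (smul_zero c))

/-- The map into the direct sum with components `f i`, on the submodule where it makes sense. -/
noncomputable def finSuppMap {A X S ι : Type*} [Ring A] [AddCommGroup X] [Module A X]
    [AddCommGroup S] [Module A S] (f : ι → X →ₗ[A] S) :
    finSuppSubmodule f →ₗ[A] (ι →₀ S) where
  toFun x := Finsupp.ofSupportFinite (fun i => f i x) x.2
  map_add' x y := by ext i; exact map_add (f i) (x : X) y
  map_smul' c x := by ext i; exact map_smul (f i) c (x : X)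

/-- If every simple right module over a ring `R` with identity is `Σ`-injective (i.e. for
every simple right `R`-module `S` and every index type `ι` the direct sum `S^{(ι)}` is an
injective right `R`-module), then `R` is directly finite: `a * b = 1` implies `b * a = 1`.
Right `R`-modules are modules over the opposite ring `Rᵐᵒᵖ`, and the direct sum of `ι`
copies of `S` is realized as `ι →₀ S`. -/
theorem stmt2 {R : Type u} [Ring R]
    (hSV : ∀ (S : Type u) [AddCommGroup S] [Module Rᵐᵒᵖ S], IsSimpleModule Rᵐᵒᵖ S →
      ∀ (ι : Type u), Module.Injective Rᵐᵒᵖ (ι →₀ S))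
    (a b : R) (hab : a * b = 1) : b * a = 1 := by
  by_contra hba
  have hfin : Module.Finite Rᵐᵒᵖ R := by
    refine ⟨⟨{1}, ?_⟩⟩
    rw [eq_top_iff]
    intro x _
    rw [Finset.coe_singleton, Submodule.mem_span_singleton]
    exact ⟨MulOpposite.op x, by simp⟩
  have hne : Submodule.span Rᵐᵒᵖ {b * a} ≠ ⊤ := by
    intro h
    have h1 : (1 : R) ∈ Submodule.span Rᵐᵒᵖ {b * a} := h ▸ Submodule.mem_top
    obtain ⟨c, hc⟩ := Submodule.mem_span_singleton.1 h1
    have hc' : b * a * c.unop = 1 := hc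
    -- `b * a` is an idempotent with a right inverse, hence equal to `1`.
    apply hba
    calc b * a = b * a * (b * a * c.unop) := by rw [hc', mul_one]
      _ = b * (a * b) * a * c.unop := by simp only [mul_assoc]
      _ = 1 := by rw [hab, mul_one, hc']
  obtain ⟨M, hM, hle⟩ := (eq_top_or_exists_le_coatom (Submodule.span Rᵐᵒᵖ {b * a})).resolve_left hne
  have hbaM : b * a ∈ M := hle (Submodule.mem_span_singleton_self _)
  have heM : 1 - b * a ∉ M := by
    intro h
    refine hM.1 (eq_top_iff.2 fun x _ => ?_)
    have h1 : (1 : R) ∈ M := by simpa using M.add_mem h hbaM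
    simpa using M.smul_mem (MulOpposite.op x) h1
  have hinj := hSV (R ⧸ M) (isSimpleModule_iff_isCoatom.2 hM) (ULift.{u} ℕ)
  let f : ULift.{u} ℕ → R →ₗ[Rᵐᵒᵖ] R ⧸ M := fun i =>
    M.mkQ ∘ₗ LinearMap.mulLeft Rᵐᵒᵖ ((1 - b * a) * a ^ i.down)
  have hf : ∀ i j, f i (b ^ j * (1 - b * a)) = if i.down = j then M.mkQ (1 - b * a) else 0 := by
    intro i j
    change M.mkQ ((1 - b * a) * a ^ i.down * (b ^ j * (1 - b * a))) = _
    rw [unit_row_mul_col hab]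
    split_ifs <;> simp
  have hmem : ∀ j, b ^ j * (1 - b * a) ∈ finSuppSubmodule f := by
    intro j
    refine (Set.finite_singleton (ULift.up j)).subset fun i hi => ?_
    by_contra h
    refine hi ((hf i j).trans (if_neg fun hij => h ?_))
    exact ULift.ext _ _ hij
  obtain ⟨g, hg⟩ := hinj.out (finSuppSubmodule f).subtype (Submodule.subtype_injective _)
    (finSuppMap f)
  obtain ⟨j, hj⟩ := Infinite.exists_notMem_finset (g 1).support
  have h0 : g 1 j = 0 := Finsupp.notMem_support_iff.1 hj
  have hval := DFunLike.congr_fun (hg ⟨_, hmem j.down⟩) j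
  have hleft : g (b ^ j.down * (1 - b * a)) j = 0 := by
    have h := map_smul g (MulOpposite.op (b ^ j.down * (1 - b * a))) 1
    rw [op_smul_eq_mul, one_mul] at h
    rw [h, Finsupp.smul_apply, h0, smul_zero]
  have hright : f j (b ^ j.down * (1 - b * a)) = 0 := hval.symm.trans hleft
  rw [hf, if_pos rfl, Submodule.mkQ_apply, Submodule.Quotient.mk_eq_zero] at hright
  exact heM hright
end

section
/- Let R be a ring with identity such that every simple right R-module is injective (i.e., R is a right V-ring). Then R is right weakly regular: every right ideal I of R satisfies I·I = I. -/
/-!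
Write `J` for `I·I` and suppose that some `x ∈ I` is not in `J`. The annihilator `A` of the class
of `x` in `R / J` is proper, so it lies in a maximal right ideal `B`, and `S = R / B` is simple,
hence injective. Since `R / A` embeds in `R / J` by `r ↦ x r`, the projection `R / A → S` extends
to `R / J → S`. This gives a right linear map `f : R → S` which vanishes on `J` and sends `x` to
the class of `1`, a generator of `S`. So `f 1 = f x * r = f (x r)` for some `r`, and multiplying on
the right by `x` gives `f x = f (x r x) = 0`, because `(x r) x ∈ I·I`. Then `1 ∈ B`, a
contradiction.
-/

/-- If every simple right module over a ring `R` with identity is injective (i.e. `R` is a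
right `V`-ring), then `R` is right weakly regular: every right ideal `I` satisfies
`I·I = I`. Right ideals are submodules of `R` regarded as a module over `Rᵐᵒᵖ`, and `I·I`
is the right ideal generated by products `x * y` with `x, y ∈ I` (equivalently, the set of
finite sums of such products). -/
theorem stmt3 {R : Type u} [Ring R]
    (hV : ∀ (S : Type u) [AddCommGroup S] [Module Rᵐᵒᵖ S], IsSimpleModule Rᵐᵒᵖ S →
      Module.Injective Rᵐᵒᵖ S)
    (I : Submodule Rᵐᵒᵖ R) :
    Submodule.span Rᵐᵒᵖ {z : R | ∃ x ∈ I, ∃ y ∈ I, x * y = z} = I := by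
  apply le_antisymm
  · rw [Submodule.span_le]
    rintro _ ⟨x, hx, y, -, rfl⟩
    exact I.smul_mem (MulOpposite.op y) hx
  intro x hx
  set J := Submodule.span Rᵐᵒᵖ {z : R | ∃ x ∈ I, ∃ y ∈ I, x * y = z} with hJ
  by_contra hxJ
  -- Taking the domain to be `Rᵐᵒᵖ` makes the annihilator of `x` mod `J` a left ideal of `Rᵐᵒᵖ`.
  let g : Rᵐᵒᵖ →ₗ[Rᵐᵒᵖ] R ⧸ J := LinearMap.toSpanSingleton Rᵐᵒᵖ (R ⧸ J) (J.mkQ x)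
  have hA : LinearMap.ker g ≠ ⊤ := by
    intro h
    have h1 : g 1 = 0 := LinearMap.mem_ker.1 (h ▸ Submodule.mem_top)
    apply hxJ
    rw [← Submodule.Quotient.mk_eq_zero]
    simpa [g] using h1
  obtain ⟨B, hB, hAB⟩ := Ideal.exists_le_maximal _ hA
  have hS : IsSimpleModule Rᵐᵒᵖ (Rᵐᵒᵖ ⧸ B) := isSimpleModule_iff_isCoatom.2 hB.out
  have hinj := hV (Rᵐᵒᵖ ⧸ B) hS
  obtain ⟨F, hF⟩ := hinj.out ((LinearMap.ker g).liftQ g le_rfl)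
    (LinearMap.ker_eq_bot.1 (Submodule.ker_liftQ_eq_bot _ _ _ le_rfl))
    ((LinearMap.ker g).liftQ B.mkQ (by rwa [Submodule.ker_mkQ]))
  let f : R →ₗ[Rᵐᵒᵖ] Rᵐᵒᵖ ⧸ B := F ∘ₗ J.mkQ
  have hfx : f x = B.mkQ 1 := by
    have h : F (g 1) = B.mkQ 1 := hF ((LinearMap.ker g).mkQ 1)
    rwa [LinearMap.toSpanSingleton_apply, one_smul] at h
  obtain ⟨r, hr⟩ := B.mkQ_surjective (f 1)
  have hf1 : f 1 = f (x * r.unop) := by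
    have h : x * r.unop = r • x := rfl
    rw [h, map_smul, hfx, ← map_smul, smul_eq_mul, mul_one, hr]
  have hf0 : f x = 0 := by
    have h1 : f x = f (x * r.unop * x) := by
      have h := congrArg (MulOpposite.op x • ·) hf1
      simpa only [← map_smul, op_smul_eq_mul, one_mul] using h
    have h2 : x * r.unop * x ∈ J :=
      Submodule.subset_span ⟨x * r.unop, I.smul_mem r hx, x, hx, rfl⟩
    have h3 : J.mkQ (x * r.unop * x) = 0 := (Submodule.Quotient.mk_eq_zero J).2 h2
    rw [h1, LinearMap.comp_apply, h3, map_zero]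
  rw [hfx] at hf0
  exact hB.ne_top ((Ideal.eq_top_iff_one B).2 ((Submodule.Quotient.mk_eq_zero B).1 hf0))
end

section
/- Let R be a ring with identity such that every simple right R-module is injective (i.e., R is a right V-ring). Then every proper right ideal I of R is the intersection of all maximal right ideals of R containing I. -/
/-!
Given `a ∉ I`, the cyclic submodule `N` of `R ⧸ I` generated by the class of `a` is nonzero and
finitely generated, hence has a maximal submodule `K`. The simple module `N ⧸ K` is injective, so
the projection `N → N ⧸ K` extends to `R ⧸ I`. Composing the extension with `R → R ⧸ I` gives a
nonzero map from `R` to a simple module; its kernel is a maximal right ideal that contains `I` but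
not `a`.
-/

/-- If every simple right module over a ring `R` with identity is injective (i.e. `R` is a
right `V`-ring), then every proper right ideal `I` of `R` is the intersection of all
maximal right ideals containing it. Right ideals are submodules of `R` regarded as a
module over `Rᵐᵒᵖ`, and maximal right ideals are the coatoms of the lattice of right
ideals. -/
theorem stmt4 {R : Type u} [Ring R]
    (hV : ∀ (S : Type u) [AddCommGroup S] [Module Rᵐᵒᵖ S], IsSimpleModule Rᵐᵒᵖ S →
      Module.Injective Rᵐᵒᵖ S)
    (I : Submodule Rᵐᵒᵖ R) (hI : I ≠ ⊤) :
    I = sInf {J : Submodule Rᵐᵒᵖ R | IsCoatom J ∧ I ≤ J} := by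
  refine le_antisymm (le_sInf fun J hJ => hJ.2) fun a ha => ?_
  by_contra haI
  let N : Submodule Rᵐᵒᵖ (R ⧸ I) := Submodule.span Rᵐᵒᵖ {I.mkQ a}
  have hmN : I.mkQ a ∈ N := Submodule.mem_span_singleton_self _
  have hm : I.mkQ a ≠ 0 := by simpa using haI
  have : Nontrivial N := ⟨⟨⟨I.mkQ a, hmN⟩, 0, fun h => hm (congrArg Subtype.val h)⟩⟩
  have : Module.Finite Rᵐᵒᵖ N := Module.Finite.span_singleton _ _
  obtain ⟨K, hK, -⟩ := (eq_top_or_exists_le_coatom (⊥ : Submodule Rᵐᵒᵖ N)).resolve_left bot_ne_top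
  have hS : IsSimpleModule Rᵐᵒᵖ (N ⧸ K) := isSimpleModule_iff_isCoatom.mpr hK
  obtain ⟨h, hh⟩ := (hV (N ⧸ K) hS).out N.subtype N.injective_subtype K.mkQ
  -- The extension `h` does not kill the generator of `N`, since otherwise `K` would be all of `N`.
  have hne : h (I.mkQ a) ≠ 0 := by
    intro h0
    have hle : N ≤ LinearMap.ker h := by
      rw [Submodule.span_singleton_le_iff_mem]
      exact h0
    refine hK.1 (eq_top_iff.mpr fun x _ => ?_)
    rw [← Submodule.Quotient.mk_eq_zero K, ← Submodule.mkQ_apply, ← hh x]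
    exact hle x.2
  let f : R →ₗ[Rᵐᵒᵖ] N ⧸ K := h ∘ₗ I.mkQ
  have hf : f ≠ 0 := fun h0 => hne (LinearMap.congr_fun h0 a)
  have hker : IsCoatom (LinearMap.ker f) :=
    LinearMap.isCoatom_ker_of_surjective (LinearMap.surjective_of_ne_zero hf)
  have hIker : I ≤ LinearMap.ker f := fun x hx => by
    have hx0 : I.mkQ x = 0 := by simpa using hx
    simp [f, LinearMap.mem_ker, hx0, -Submodule.mkQ_apply]
  exact hne ((Submodule.mem_sInf.mp ha) _ ⟨hker, hIker⟩)
end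

section
/- Let R be a ring with identity, and suppose there are right ideals S and T of R such that R = S ⊕ T (internal direct sum of right R-modules), T ≠ 0, and S is isomorphic to R as a right R-module. Then there exists an infinite family (T_n)_{n∈ℕ} of nonzero right ideals of R that are pairwise isomorphic as right R-modules and independent (the family of submodules is independent, i.e., each T_n intersects the sum of the others trivially). -/
/-!
An isomorphism `S ≃ R` together with the inclusion of `T` gives an injective linear map
`T × R → R` with image `T ⊕ S`. Iterating it in the second coordinate embeds a countable direct
sum of copies of `T` into `R` (`LinearMap.exists_finsupp_nat_of_prod_injective`). The images of
the individual copies are independent because the coordinate copies are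
(`Finsupp.lsingle` has independent ranges), and each is isomorphic to `T`, hence nonzero.
-/

theorem stmt6 {R : Type*} [Ring R] (S T : Submodule Rᵐᵒᵖ R)
    (hdisj : S ⊓ T = ⊥) (hsup : S ⊔ T = ⊤) (hT : T ≠ ⊥)
    (hiso : Nonempty ((S : Submodule Rᵐᵒᵖ R) ≃ₗ[Rᵐᵒᵖ] R)) :
    ∃ T' : ℕ → Submodule Rᵐᵒᵖ R,
      (∀ i, T' i ≠ ⊥) ∧
      (∀ i j, Nonempty ((T' i : Submodule Rᵐᵒᵖ R) ≃ₗ[Rᵐᵒᵖ] (T' j : Submodule Rᵐᵒᵖ R))) ∧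
      iSupIndep T' := by
  obtain ⟨e⟩ := hiso
  have inj : Function.Injective
      (T.subtype.coprod (S.subtype ∘ₗ e.symm.toLinearMap)) := by
    rw [← LinearMap.ker_eq_bot, LinearMap.ker_coprod_of_disjoint_range]
    · have hS : LinearMap.ker (S.subtype ∘ₗ e.symm.toLinearMap) = ⊥ :=
        LinearMap.ker_eq_bot.2 (S.injective_subtype.comp e.symm.injective)
      rw [Submodule.ker_subtype, hS, Submodule.prod_bot]
    · rw [LinearMap.range_comp_of_range_eq_top _ (LinearEquiv.range e.symm),
        Submodule.range_subtype, Submodule.range_subtype]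
      exact (disjoint_iff.2 hdisj).symm
  obtain ⟨g, hg⟩ := LinearMap.exists_finsupp_nat_of_prod_injective inj
  have equiv : ∀ i : ℕ, Nonempty
      (T ≃ₗ[Rᵐᵒᵖ] (LinearMap.range (Finsupp.lsingle (R := Rᵐᵒᵖ) (M := T) i)).map g) := fun i =>
    ⟨(LinearEquiv.ofInjective (Finsupp.lsingle i) (Finsupp.single_injective i)).trans
      (Submodule.equivMapOfInjective g hg _)⟩
  refine ⟨fun i => (LinearMap.range (Finsupp.lsingle (R := Rᵐᵒᵖ) (M := T) i)).map g,
    fun i h => ?_, fun i j => ?_, g.iSupIndep_map hg (iSupIndep_range_lsingle ℕ Rᵐᵒᵖ T)⟩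
  · obtain ⟨f⟩ := equiv i
    have := (Submodule.subsingleton_iff_eq_bot.2 h)
    exact hT (Submodule.subsingleton_iff_eq_bot.1 f.toEquiv.subsingleton)
  · obtain ⟨f⟩ := equiv i
    obtain ⟨f'⟩ := equiv j
    exact ⟨f.symm.trans f'⟩
end

section
/- Let E be a quiver whose vertex set is downward directed, which has at least one sink, and in which no cycle has an exit. Then E is acyclic: E contains no cycles. -/
/-!
A cycle `c` without exits is a trap: the set `S` of sources of its edges contains the base vertex,
and every edge of the quiver starting in `S` is an edge of `c`, hence ends in `S` again. So every
path starting at the base vertex ends in `S`. Downward directedness, applied to the base vertex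
and a sink, gives a path from the base vertex to the sink, since the only path out of a sink is
trivial. Then the sink lies in `S`, although every vertex of `S` emits an edge.
-/

namespace QuiverAux

variable {V : Type*} [Quiver V]

/-- The list of vertices visited by a path: its starting vertex followed by the targets of
its successive edges. -/
def vertsList {a : V} : {b : V} → Quiver.Path a b → List V
  | _, Quiver.Path.nil => [a]
  | b, Quiver.Path.cons p _ => vertsList p ++ [b]

/-- The list of edges of a path, as a list of sigma-bundled edges. -/
def edgeList {a : V} : {b : V} → Quiver.Path a b → List (Σ x : V, Σ y : V, x ⟶ y)
  | _, Quiver.Path.nil => []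
  | _, @Quiver.Path.cons _ _ _ c b p e => edgeList p ++ [⟨c, b, e⟩]

/-- A cycle is a path of positive length from a vertex back to itself that does not pass
through any vertex twice: the sources of its edges (equivalently, all visited vertices
except the final return to the base) are pairwise distinct. -/
def IsCycle {v : V} (c : Quiver.Path v v) : Prop :=
  0 < c.length ∧ (vertsList c).dropLast.Nodup

/-- An exit for a path `c = e₁e₂⋯eₙ` is an edge `f` whose source equals the source of some
`eᵢ` but which is different (as a bundled edge) from `eᵢ`. -/
def HasExit {v : V} (c : Quiver.Path v v) : Prop :=
  ∃ (x y : V) (f : x ⟶ y), ∃ e ∈ edgeList c,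
    e.1 = x ∧ (⟨x, y, f⟩ : Σ x : V, Σ y : V, x ⟶ y) ≠ e

/-- A vertex is a sink if no edge starts at it. -/
def IsSink (u : V) : Prop := ∀ w : V, IsEmpty (u ⟶ w)

end QuiverAux

namespace QuiverAux

theorem exists_edge_source_eq_start {V : Type*} [Quiver V] {a b : V} (p : Quiver.Path a b)
    (hp : 0 < p.length) : ∃ e ∈ edgeList p, e.1 = a := by
  induction p with
  | nil => simp at hp
  | @cons c d p f ih =>
    cases p with
    | nil => exact ⟨⟨a, d, f⟩, by simp [edgeList], rfl⟩
    | cons q g =>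
      obtain ⟨e, he, hea⟩ := ih (by simp)
      exact ⟨e, List.mem_append_left _ he, hea⟩

theorem edge_target_eq_end_or_source {V : Type*} [Quiver V] {a b : V} (p : Quiver.Path a b) :
    ∀ e ∈ edgeList p, e.2.1 = b ∨ ∃ e' ∈ edgeList p, e'.1 = e.2.1 := by
  induction p with
  | nil => simp [edgeList]
  | @cons c d p f ih =>
    intro e he
    rcases List.mem_append.1 he with he | he
    · right
      rcases ih e he with h | ⟨e', he', h⟩
      · exact ⟨⟨c, d, f⟩, by simp [edgeList], h.symm⟩
      · exact ⟨e', List.mem_append_left _ he', h⟩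
    · left
      rw [List.mem_singleton.1 he]

/-- A path leaving the base vertex of a closed path without exits never leaves the set of sources
of its edges. -/
theorem end_mem_sources_of_not_hasExit {V : Type*} [Quiver V] {v w : V} (c : Quiver.Path v v)
    (hc : 0 < c.length) (hexit : ¬ HasExit c) (p : Quiver.Path v w) :
    ∃ e ∈ edgeList c, e.1 = w := by
  induction p with
  | nil => exact exists_edge_source_eq_start c hc
  | @cons x y p f ih =>
    obtain ⟨e, he, hex⟩ := ih
    have hfe : (⟨x, y, f⟩ : Σ x : V, Σ y : V, x ⟶ y) = e := by
      by_contra hne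
      exact hexit ⟨x, y, f, e, he, hex, hne⟩
    subst hfe
    rcases edge_target_eq_end_or_source c _ he with h | h
    · obtain ⟨e, he, hev⟩ := exists_edge_source_eq_start c hc
      exact ⟨e, he, hev.trans h.symm⟩
    · exact h

theorem IsSink.eq_of_path {V : Type*} [Quiver V] {s w : V} (hs : IsSink s)
    (p : Quiver.Path s w) : w = s := by
  induction p with
  | nil => rfl
  | cons p f ih =>
    subst ih
    exact (hs _).elim f

end QuiverAux

open QuiverAux

/-- A quiver whose vertex set is downward directed, which has at least one sink, and in
which no cycle has an exit, is acyclic. -/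
theorem stmt9 {V : Type*} [Quiver V]
    (hdd : ∀ u v : V, ∃ w : V, Nonempty (Quiver.Path u w) ∧ Nonempty (Quiver.Path v w))
    (hsink : ∃ w : V, IsSink w)
    (hnoexit : ∀ (v : V) (c : Quiver.Path v v), IsCycle c → ¬ HasExit c) :
    ∀ (v : V) (c : Quiver.Path v v), ¬ IsCycle c := by
  intro v c hc
  obtain ⟨s, hs⟩ := hsink
  obtain ⟨w, ⟨p⟩, ⟨q⟩⟩ := hdd v s
  obtain rfl := hs.eq_of_path q
  obtain ⟨⟨x, y, f⟩, -, rfl⟩ := end_mem_sources_of_not_hasExit c hc.1 (hnoexit v c hc) p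
  exact (hs y).elim f
end

section
/- Let E be a quiver whose vertex set is downward directed and in which no cycle has an exit. Then any two cycles of E pass through exactly the same vertices: if c and c' are cycles of E, the set of vertices visited by c equals the set of vertices visited by c'. -/
open QuiverAux

namespace QuiverAux

variable {V : Type*} [Quiver V]

theorem start_mem_vertsList {a b : V} (p : Quiver.Path a b) : a ∈ vertsList p := by
  induction p with
  | nil => simp [vertsList]
  | cons p e ih => simp [vertsList, ih]

theorem path_of_mem_vertsList {a b x : V} (p : Quiver.Path a b) (hx : x ∈ vertsList p) :
    Nonempty (Quiver.Path a x) ∧ Nonempty (Quiver.Path x b) := by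
  induction p with
  | nil =>
    obtain rfl : x = a := by simpa [vertsList] using hx
    exact ⟨⟨.nil⟩, ⟨.nil⟩⟩
  | @cons d b p e ih =>
    rcases List.mem_append.1 hx with h | h
    · obtain ⟨h₁, ⟨q⟩⟩ := ih h
      exact ⟨h₁, ⟨q.cons e⟩⟩
    · obtain rfl := List.mem_singleton.1 h
      exact ⟨⟨p.cons e⟩, ⟨.nil⟩⟩

theorem exists_edge_of_mem_vertsList {a b x : V} (p : Quiver.Path a b)
    (hx : x ∈ vertsList p) : x = b ∨ ∃ e ∈ edgeList p, e.1 = x := by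
  induction p with
  | nil => exact Or.inl (by simpa [vertsList] using hx)
  | @cons d b p e ih =>
    rcases List.mem_append.1 hx with h | h
    · right
      rcases ih h with rfl | ⟨f, hf, rfl⟩
      · exact ⟨⟨x, b, e⟩, by simp [edgeList], rfl⟩
      · exact ⟨f, by simp [edgeList, hf], rfl⟩
    · exact Or.inl (List.mem_singleton.1 h)

theorem exists_edge_start {a b : V} (p : Quiver.Path a b) (hp : 0 < p.length) :
    ∃ e ∈ edgeList p, e.1 = a := by
  cases p with
  | nil => simp at hp
  | @cons d _ p e =>
    rcases exists_edge_of_mem_vertsList p (start_mem_vertsList p) with rfl | ⟨f, hf, h⟩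
    · exact ⟨⟨a, b, e⟩, by simp [edgeList], rfl⟩
    · exact ⟨f, by simp [edgeList, hf], h⟩

theorem target_mem_vertsList {a b : V} (p : Quiver.Path a b) {e : Σ x : V, Σ y : V, x ⟶ y}
    (he : e ∈ edgeList p) : e.2.1 ∈ vertsList p := by
  induction p with
  | nil => simp [edgeList] at he
  | @cons d b p f ih =>
    rcases List.mem_append.1 he with h | h
    · exact List.mem_append_left _ (ih h)
    · obtain rfl := List.mem_singleton.1 h
      simp [vertsList]

/-- Paths starting on a closed path of positive length without exits stay on it. -/
theorem mem_vertsList_of_path {v : V} (c : Quiver.Path v v) (hpos : 0 < c.length)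
    (hc : ¬ HasExit c) {x y : V} (q : Quiver.Path x y) (hx : x ∈ vertsList c) :
    y ∈ vertsList c := by
  induction q with
  | nil => exact hx
  | @cons y z q f ih =>
    have hy : ∃ e ∈ edgeList c, e.1 = y := by
      rcases exists_edge_of_mem_vertsList c ih with rfl | h
      · exact exists_edge_start c hpos
      · exact h
    obtain ⟨e, he, hey⟩ := hy
    have hfe : (⟨y, z, f⟩ : Σ x : V, Σ y : V, x ⟶ y) = e := by
      by_contra hne
      exact hc ⟨y, z, f, e, he, hey, hne⟩
    subst hfe
    exact target_mem_vertsList c he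

end QuiverAux

/-- In a quiver whose vertex set is downward directed and in which no cycle has an exit,
any two cycles pass through exactly the same vertices. -/
theorem stmt10 {V : Type*} [Quiver V]
    (hdd : ∀ u v : V, ∃ w : V, Nonempty (Quiver.Path u w) ∧ Nonempty (Quiver.Path v w))
    (hnoexit : ∀ (v : V) (c : Quiver.Path v v), IsCycle c → ¬ HasExit c)
    {v v' : V} (c : Quiver.Path v v) (c' : Quiver.Path v' v')
    (hc : IsCycle c) (hc' : IsCycle c') :
    ∀ x : V, x ∈ vertsList c ↔ x ∈ vertsList c' := by
  obtain ⟨w, ⟨p⟩, ⟨p'⟩⟩ := hdd v v'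
  have stay := fun x y (q : Quiver.Path x y) =>
    mem_vertsList_of_path c hc.1 (hnoexit v c hc) q
  have stay' := fun x y (q : Quiver.Path x y) =>
    mem_vertsList_of_path c' hc'.1 (hnoexit v' c' hc') q
  have hw := stay v w p (start_mem_vertsList c)
  have hw' := stay' v' w p' (start_mem_vertsList c')
  obtain ⟨-, ⟨r⟩⟩ := path_of_mem_vertsList c hw
  obtain ⟨-, ⟨r'⟩⟩ := path_of_mem_vertsList c' hw'
  refine fun x => ⟨fun hx => ?_, fun hx => ?_⟩
  · obtain ⟨⟨q⟩, -⟩ := path_of_mem_vertsList c hx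
    exact stay' w x (r.comp q) hw'
  · obtain ⟨⟨q⟩, -⟩ := path_of_mem_vertsList c' hx
    exact stay w x (r'.comp q) hw
end

section
/- Let E be a quiver satisfying Condition (K): every vertex v that is the base of some simple closed path is the base of at least two distinct simple closed paths. Then every cycle in E has an exit. -/
open QuiverAux

/-- A closed path based at `v` (a path of positive length from `v` to `v`) is simple if
it does not pass through its base `v` more than once: `v` occurs among the sources of its
edges only as the source of the first edge. -/
def IsSimpleClosed {V : Type*} [Quiver V] {v : V} (p : Quiver.Path v v) : Prop :=
  0 < p.length ∧ v ∉ ((vertsList p).dropLast).tail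

namespace QuiverAux

variable {V : Type*} [Quiver V]

lemma vertsList_eq_cons {a b : V} (p : Quiver.Path a b) : ∃ t, vertsList p = a :: t := by
  induction p with
  | nil => exact ⟨[], rfl⟩
  | cons p e ih =>
    obtain ⟨t, ht⟩ := ih
    exact ⟨_, by rw [vertsList, ht, List.cons_append]⟩

lemma vertsList_comp {a b d : V} (p : Quiver.Path a b) (r : Quiver.Path b d) :
    vertsList (p.comp r) = (vertsList p).dropLast ++ vertsList r := by
  induction r with
  | nil => cases p <;> simp [vertsList]
  | cons r e ih => simp [vertsList, ih]

lemma edgeList_comp {a b d : V} (p : Quiver.Path a b) (r : Quiver.Path b d) :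
    edgeList (p.comp r) = edgeList p ++ edgeList r := by
  induction r with
  | nil => simp [edgeList]
  | cons r e ih => simp [edgeList, ih]

lemma IsCycle.isSimpleClosed {v : V} {c : Quiver.Path v v} (hc : IsCycle c) :
    IsSimpleClosed c := by
  refine ⟨hc.1, ?_⟩
  have hn := hc.2
  cases c with
  | nil => simp [vertsList]
  | cons c e =>
    obtain ⟨t, ht⟩ := vertsList_eq_cons c
    simp only [vertsList, List.dropLast_concat, ht, List.nodup_cons] at hn
    simpa only [vertsList, List.dropLast_concat, ht, List.tail_cons] using hn.1

/-- A simple closed path has no proper prefix which is a closed path of positive length. -/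
lemma _root_.IsSimpleClosed.eq_nil_of_comp {v : V} {p r : Quiver.Path v v}
    (h : IsSimpleClosed (p.comp r)) (hp : 0 < p.length) : r = Quiver.Path.nil := by
  have hv := h.2
  cases r with
  | nil => rfl
  | cons r e =>
    cases p with
    | nil => simp at hp
    | cons p f =>
      obtain ⟨t, ht⟩ := vertsList_eq_cons p
      obtain ⟨s, hs⟩ := vertsList_eq_cons r
      rw [Quiver.Path.comp_cons, vertsList, List.dropLast_concat, vertsList_comp, vertsList,
        List.dropLast_concat, ht, hs] at hv
      simp at hv

/-- A path starting at the base of a closed path without exit either is a prefix of it or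
extends it. -/
lemma prefix_or_extends {v : V} {c : Quiver.Path v v} (hc : ¬ HasExit c) {a : V}
    (p : Quiver.Path v a) :
    (∃ r : Quiver.Path a v, c = p.comp r) ∨ (∃ r : Quiver.Path v a, p = c.comp r) := by
  induction p with
  | nil => exact Or.inl ⟨c, by simp⟩
  | @cons b d p e ih =>
    rcases ih with ⟨r, hr⟩ | ⟨r, rfl⟩
    · by_cases h0 : r.length = 0
      · obtain rfl := r.eq_of_length_zero h0
        obtain rfl := r.eq_nil_of_length_zero h0
        exact Or.inr ⟨e.toPath, by rw [hr]; rfl⟩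
      · obtain ⟨n, hn⟩ := Nat.exists_eq_succ_of_ne_zero h0
        obtain ⟨x, f, r', -, rfl⟩ := r.eq_toPath_comp_of_length_eq_succ hn
        have hf : (⟨b, x, f⟩ : Σ x : V, Σ y : V, x ⟶ y) ∈ edgeList c := by
          rw [hr, edgeList_comp, edgeList_comp]
          simp [Quiver.Hom.toPath, edgeList]
        -- The edge `e` leaves `c` at the source of `f`, so in the absence of exits it is `f`.
        have hef : (⟨b, d, e⟩ : Σ x : V, Σ y : V, x ⟶ y) = ⟨b, x, f⟩ := by
          by_contra hne
          exact hc ⟨b, d, e, _, hf, rfl, hne⟩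
        cases hef
        exact Or.inl ⟨r', by rw [hr, ← Quiver.Path.comp_assoc]; rfl⟩
    · exact Or.inr ⟨r.cons e, rfl⟩

lemma _root_.IsSimpleClosed.eq_of_not_hasExit {v : V} {c p : Quiver.Path v v} (hc : IsSimpleClosed c)
    (hexit : ¬ HasExit c) (hp : IsSimpleClosed p) : p = c := by
  rcases prefix_or_extends hexit p with ⟨r, rfl⟩ | ⟨r, rfl⟩
  · rw [hc.eq_nil_of_comp hp.1, Quiver.Path.comp_nil]
  · rw [hp.eq_nil_of_comp hc.1, Quiver.Path.comp_nil]

end QuiverAux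

/-- If a quiver satisfies Condition (K) — every vertex that is the base of some simple
closed path is the base of at least two distinct simple closed paths — then every cycle
has an exit. -/
theorem stmt15 {V : Type*} [Quiver V]
    (hK : ∀ v : V, (∃ p : Quiver.Path v v, IsSimpleClosed p) →
      ∃ p q : Quiver.Path v v, IsSimpleClosed p ∧ IsSimpleClosed q ∧ p ≠ q) :
    ∀ (v : V) (c : Quiver.Path v v), IsCycle c → HasExit c := by
  intro v c hc
  by_contra hexit
  have hs := hc.isSimpleClosed
  obtain ⟨p, q, hp, hq, hpq⟩ := hK v ⟨c, hs⟩
  exact hpq ((hs.eq_of_not_hasExit hexit hp).trans (hs.eq_of_not_hasExit hexit hq).symm)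
end
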